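/- There exists an absolute constant C > 0 such that the following holds. Let K ≥ 1, L ≥ 2, n ≥ 1 and X ≥ 2 be integers. Let f : ℚ \ {0} → ℤ_{≥0} and g : Q_{≤K} → ℤ_{≥0} be finitely supported functions with all values of f and g at most X. Suppose B ⊆ Q_{≤L} satisfies |B ∩ Q_{=ℓ}| ≤ n for every 1 ≤ ℓ ≤ L, and let ω : ℕ → ℝ_{≥0} be sub-multiplicative. Then Σ' over reduced fractions a/k, b/ℓ, c/q with a/k − b/ℓ = c/q and b/ℓ ∈ B of ω(k)·g(a/k)·f(c/q) is at most C · (log X) · ( L·n·(log L)·M_log(ω·τ₃; L) )^{1/2} · ( Σ'_{c/q} ω(q)·τ₃(q)²·f(c/q)² )^{1/2} · ( Σ'_{a/k} ω(k)·g(a/k)² )^{1/2}, where Σ' means all fractions are written in lowest terms. -/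

import Mathlib

/-- The set of reduced rationals `a/q ∈ [0,1]` with `1 ≤ a ≤ q` and `gcd(a,q) = 1`. -/
def Qeq (q : ℕ) : Finset ℚ :=
  ((Finset.Icc 1 q).filter fun a => Nat.gcd a q = 1).image fun a : ℕ => (a : ℚ) / (q : ℚ)

/-- The set of rationals in `[0,1]` with denominator at most `Q`. -/
def Qle (Q : ℕ) : Finset ℚ := (Finset.Icc 1 Q).biUnion Qeq

/-- The ternary divisor function `τ₃(n) = #{(a,b,c) ∈ ℕ³ : abc = n}`. -/
def tau3 (n : ℕ) : ℕ :=
  ((Finset.Icc 1 n ×ˢ Finset.Icc 1 n ×ˢ Finset.Icc 1 n).filter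
    fun p => p.1 * p.2.1 * p.2.2 = n).card

/-- The logarithmic maximal average `M_log(ω; X) = max_{2 ≤ x ≤ X} (1/log x) ∑_{n ≤ x} ω(n)/n`. -/
noncomputable def MlogAvg (w : ℕ → ℝ) (X : ℕ) : ℝ :=
  ⨆ x ∈ Finset.Icc 2 X, (∑ n ∈ Finset.Icc 1 x, w n / (n : ℝ)) / Real.log x

/-- `ω` is sub-multiplicative: `ω(ab) ≤ ω(a)ω(b)` and `ω(d) ≤ ω(n)` whenever `d ∣ n`. -/
def SubMult (w : ℕ → ℝ) : Prop :=
  (∀ a b : ℕ, 0 < a → 0 < b → w (a * b) ≤ w a * w b) ∧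
    ∀ d n : ℕ, 0 < n → d ∣ n → w d ≤ w n

theorem tau3_mul_le (m n : ℕ) (hm : 0 < m) (hn : 0 < n) : tau3 (m * n) ≤ tau3 m * tau3 n := by
  unfold tau3
  rw [← Finset.card_product]
  refine Finset.card_le_card_of_surjOn
    (fun p => (p.1.1 * p.2.1, p.1.2.1 * p.2.2.1, p.1.2.2 * p.2.2.2)) ?_
  rintro ⟨a, b, c⟩ h
  simp only [Finset.coe_filter, Finset.mem_product, Finset.mem_Icc, Set.mem_ofPred_eq] at h
  obtain ⟨-, h⟩ := h
  obtain ⟨m₁₂, m₃, h₁₂, ⟨c', rfl⟩, rfl⟩ :=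
    exists_dvd_and_dvd_of_dvd_mul (show m ∣ a * b * c from h ▸ dvd_mul_right m n)
  obtain ⟨m₁, m₂, ⟨a', rfl⟩, ⟨b', rfl⟩, rfl⟩ := exists_dvd_and_dvd_of_dvd_mul h₁₂
  have h' : a' * b' * c' = n := by
    apply Nat.eq_of_mul_eq_mul_left hm
    rw [← h]; ring
  subst h'
  have key : ∀ x y z : ℕ, 0 < x * y * z →
      (x, y, z) ∈ (Finset.Icc 1 (x * y * z) ×ˢ Finset.Icc 1 (x * y * z) ×ˢ
        Finset.Icc 1 (x * y * z)).filter fun p => p.1 * p.2.1 * p.2.2 = x * y * z := by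
    intro x y z h0
    have hx : 0 < x := by by_contra hx; simp_all
    have hy : 0 < y := by by_contra hx; simp_all
    have hz : 0 < z := by by_contra hx; simp_all
    simp only [Finset.mem_filter, Finset.mem_product, Finset.mem_Icc, and_true]
    refine ⟨⟨hx, Nat.le_of_dvd h0 ⟨y * z, by ring⟩⟩, ⟨hy, Nat.le_of_dvd h0 ⟨x * z, by ring⟩⟩,
      ⟨hz, Nat.le_of_dvd h0 ⟨x * y, by ring⟩⟩⟩
  exact ⟨((m₁, m₂, m₃), (a', b', c')), by
    rw [Finset.mem_coe, Finset.mem_product]; exact ⟨key _ _ _ hm, key _ _ _ hn⟩, rfl⟩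

theorem tau3_le_mul_right (m n : ℕ) (hn : 0 < n) : tau3 m ≤ tau3 (m * n) := by
  unfold tau3
  refine Finset.card_le_card_of_injOn (fun p => (p.1 * n, p.2.1, p.2.2)) ?_ ?_
  · rintro ⟨a, b, c⟩ h
    simp only [Finset.coe_filter, Finset.mem_product, Finset.mem_Icc, Set.mem_ofPred_eq] at h ⊢
    obtain ⟨⟨⟨ha, ha'⟩, ⟨hb, hb'⟩, ⟨hc, hc'⟩⟩, rfl⟩ := h
    have : a * b * c ≤ a * b * c * n := Nat.le_mul_of_pos_right _ hn
    exact ⟨⟨⟨Nat.mul_pos ha hn, Nat.mul_le_mul_right n ha'⟩, ⟨hb, hb'.trans this⟩,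
      ⟨hc, hc'.trans this⟩⟩, by ring⟩
  · rintro ⟨a, b, c⟩ - ⟨a', b', c'⟩ - h
    simpa [hn.ne'] using h

theorem tau3_pos (n : ℕ) (hn : 0 < n) : 0 < tau3 n :=
  Finset.card_pos.2 ⟨(1, 1, n), by simp; omega⟩

/-- Summing over ordered factorizations into three parts counts each value with weight `tau3`. -/
theorem sum_mul_mul_le_sum_tau3 (N M : ℕ) (φ : ℕ → ℝ) (hφ : ∀ k, 0 ≤ φ k)
    (hM : ∀ k, M < k → φ k = 0) :
    ∑ p ∈ Finset.Icc 1 N ×ˢ Finset.Icc 1 N ×ˢ Finset.Icc 1 N, φ (p.1 * p.2.1 * p.2.2) ≤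
      ∑ k ∈ Finset.Icc 1 M, (tau3 k : ℝ) * φ k := by
  set P := Finset.Icc 1 N ×ˢ Finset.Icc 1 N ×ˢ Finset.Icc 1 N with hP
  have hpos : ∀ p ∈ P, 0 < p.1 ∧ 0 < p.2.1 ∧ 0 < p.2.2 := by
    intro p hp
    simp only [hP, Finset.mem_product, Finset.mem_Icc] at hp
    omega
  calc ∑ p ∈ P, φ (p.1 * p.2.1 * p.2.2)
      = ∑ p ∈ P with p.1 * p.2.1 * p.2.2 ≤ M, φ (p.1 * p.2.1 * p.2.2) := by
        rw [Finset.sum_filter]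
        refine Finset.sum_congr rfl fun p _ => ?_
        split_ifs with h
        · rfl
        · exact hM _ (not_le.1 h)
    _ = ∑ k ∈ Finset.Icc 1 M, ∑ p ∈ P.filter (fun p => p.1 * p.2.1 * p.2.2 ≤ M) with
          p.1 * p.2.1 * p.2.2 = k, φ (p.1 * p.2.1 * p.2.2) := by
        refine (Finset.sum_fiberwise_of_maps_to (fun p hp => ?_) _).symm
        rw [Finset.mem_filter] at hp
        obtain ⟨h1, h2, h3⟩ := hpos p hp.1
        exact Finset.mem_Icc.2 ⟨Nat.mul_pos (Nat.mul_pos h1 h2) h3, hp.2⟩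
    _ ≤ _ := by
        refine Finset.sum_le_sum fun k hk => ?_
        rw [Finset.sum_congr rfl (g := fun _ => φ k)
          (fun p hp => by rw [(Finset.mem_filter.1 hp).2]), Finset.sum_const, nsmul_eq_mul]
        refine mul_le_mul_of_nonneg_right (Nat.cast_le.2 (Finset.card_le_card fun p hp => ?_))
          (hφ k)
        rw [Finset.mem_filter, Finset.mem_filter] at hp
        obtain ⟨⟨hp, -⟩, rfl⟩ := hp
        obtain ⟨h1, h2, h3⟩ := hpos p hp
        have h0 : 0 < p.1 * p.2.1 * p.2.2 := by positivity
        simp only [Finset.mem_filter, Finset.mem_product, Finset.mem_Icc, and_true]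
        exact ⟨⟨h1, Nat.le_of_dvd h0 ⟨p.2.1 * p.2.2, by ring⟩⟩,
          ⟨h2, Nat.le_of_dvd h0 ⟨p.1 * p.2.2, by ring⟩⟩,
          ⟨h3, Nat.le_of_dvd h0 ⟨p.1 * p.2.1, by ring⟩⟩⟩

theorem Nat.mul_gcd_gcd_eq_of_dvd_lcm {k l q : ℕ} (h : k ∣ l.lcm q) :
    k * (k.gcd l).gcd q = k.gcd l * k.gcd q := by
  have hk : (k.gcd l).gcd q ∣ k := (Nat.gcd_dvd_left _ _).trans (Nat.gcd_dvd_left _ _)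
  have hl : (k.gcd l).gcd q ∣ l := (Nat.gcd_dvd_left _ _).trans (Nat.gcd_dvd_right _ _)
  have hq : (k.gcd l).gcd q ∣ q := Nat.gcd_dvd_right _ _
  apply Nat.dvd_antisymm
  · rw [show k.gcd l * k.gcd q = ((k * k).gcd (k * q)).gcd ((l * k).gcd (l * q)) by
      rw [Nat.gcd_mul_left, Nat.gcd_mul_left, Nat.gcd_mul_right]]
    refine Nat.dvd_gcd (Nat.dvd_gcd (mul_dvd_mul_left k hk) (mul_dvd_mul_left k hq))
      (Nat.dvd_gcd ?_ ?_)
    · rw [mul_comm l]; exact mul_dvd_mul_left k hl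
    · rw [← Nat.gcd_mul_lcm l q, mul_comm]
      exact mul_dvd_mul (Nat.dvd_gcd hl hq) h
  · rw [show k * (k.gcd l).gcd q = ((k * k).gcd (k * l)).gcd (k * q) by
      rw [Nat.gcd_mul_left, Nat.gcd_mul_left]]
    refine Nat.dvd_gcd (Nat.dvd_gcd ?_ ?_) ?_
    · exact mul_dvd_mul (Nat.gcd_dvd_left _ _) (Nat.gcd_dvd_left _ _)
    · rw [mul_comm]; exact mul_dvd_mul (Nat.gcd_dvd_left _ _) (Nat.gcd_dvd_right _ _)
    · exact mul_dvd_mul (Nat.gcd_dvd_left _ _) (Nat.gcd_dvd_right _ _)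

/-- Structure of the denominators of two rationals and of their difference. -/
theorem Rat.exists_den_factorization (x y : ℚ) :
    ∃ p : ℕ × ℕ × ℕ × ℕ, (0 < p.1 ∧ 0 < p.2.1 ∧ 0 < p.2.2.1 ∧ 0 < p.2.2.2) ∧
      x.den = p.1 * p.2.1 * p.2.2.2 ∧ y.den = p.1 * p.2.2.1 * p.2.2.2 ∧
      (x - y).den = p.2.1 * p.2.2.1 * p.2.2.2 ∧
      (x.den.gcd y.den).gcd (x - y).den = p.2.2.2 := by
  have hk : x.den ∣ y.den.lcm (x - y).den := by
    simpa using Rat.add_den_dvd_lcm y (x - y)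
  have hl : y.den ∣ x.den.lcm (x - y).den := by
    simpa using Rat.sub_den_dvd_lcm x (x - y)
  have hq : (x - y).den ∣ x.den.lcm y.den := Rat.sub_den_dvd_lcm x y
  have k0 := x.den_pos
  have l0 := y.den_pos
  have q0 := (x - y).den_pos
  generalize x.den = k at *
  generalize y.den = l at *
  generalize (x - y).den = q at *
  have e1 := Nat.mul_gcd_gcd_eq_of_dvd_lcm hk
  have e2 := Nat.mul_gcd_gcd_eq_of_dvd_lcm hl
  have e3 := Nat.mul_gcd_gcd_eq_of_dvd_lcm hq
  rw [Nat.gcd_comm l k] at e2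
  rw [Nat.gcd_comm q k, Nat.gcd_assoc k q l, Nat.gcd_comm q l, ← Nat.gcd_assoc] at e3
  have u0 : 0 < (k.gcd l).gcd q := Nat.gcd_pos_of_pos_right _ q0
  have d1 : (k.gcd l).gcd q ∣ k.gcd l := Nat.gcd_dvd_left _ _
  have d2 : (k.gcd l).gcd q ∣ k.gcd q :=
    Nat.dvd_gcd (d1.trans (Nat.gcd_dvd_left _ _)) (Nat.gcd_dvd_right _ _)
  have d3 : (k.gcd l).gcd q ∣ l.gcd q :=
    Nat.dvd_gcd (d1.trans (Nat.gcd_dvd_right _ _)) (Nat.gcd_dvd_right _ _)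
  have p1 : 0 < k.gcd l := Nat.gcd_pos_of_pos_left _ k0
  have p2 : 0 < k.gcd q := Nat.gcd_pos_of_pos_left _ k0
  have p3 : 0 < l.gcd q := Nat.gcd_pos_of_pos_left _ l0
  generalize (k.gcd l).gcd q = u at *
  obtain ⟨r, hr⟩ := d1
  obtain ⟨s, hs⟩ := d2
  obtain ⟨t, ht⟩ := d3
  rw [hr] at p1 e1 e2
  rw [hs] at p2 e1 e3
  rw [ht] at p3 e2 e3
  refine ⟨(r, s, t, u), ⟨pos_of_mul_pos_right p1 u0.le, pos_of_mul_pos_right p2 u0.le,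
    pos_of_mul_pos_right p3 u0.le, u0⟩, ?_, ?_, ?_, rfl⟩
  · apply Nat.eq_of_mul_eq_mul_right u0; rw [e1]; ring
  · apply Nat.eq_of_mul_eq_mul_right u0; rw [e2]; ring
  · apply Nat.eq_of_mul_eq_mul_right u0; rw [e3]; ring

theorem Rat.den_dvd_of_mul_eq_intCast {d : ℚ} {k : ℕ} (hk : 0 < k) {m : ℤ} (h : (k : ℚ) * d = m) :
    d.den ∣ k := by
  have : d = Rat.divInt m k := by
    rw [Rat.divInt_eq_div, ← h]; push_cast; field_simp
  rw [this]
  exact Int.natCast_dvd_natCast.1 (Rat.den_dvd m k)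

/-- Rationals in `(0, 1]` whose multiples by `k`, `l`, `q` are prescribed modulo one are separated
by the ceiling of their multiple by `gcd k l q`. -/
theorem eq_of_ceil_eq {k l q : ℕ} (hk : 0 < k) (hl : 0 < l) (hq : 0 < q) {x x' : ℚ}
    (h1 : ∃ m : ℤ, (k : ℚ) * (x - x') = m) (h2 : ∃ m : ℤ, (l : ℚ) * (x - x') = m)
    (h3 : ∃ m : ℤ, (q : ℚ) * (x - x') = m)
    (hc : ⌈(((k.gcd l).gcd q : ℕ) : ℚ) * x⌉ = ⌈(((k.gcd l).gcd q : ℕ) : ℚ) * x'⌉) : x = x' := by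
  obtain ⟨m₁, h1⟩ := h1
  obtain ⟨m₂, h2⟩ := h2
  obtain ⟨m₃, h3⟩ := h3
  have hd : (x - x').den ∣ (k.gcd l).gcd q :=
    Nat.dvd_gcd (Nat.dvd_gcd (Rat.den_dvd_of_mul_eq_intCast hk h1)
      (Rat.den_dvd_of_mul_eq_intCast hl h2)) (Rat.den_dvd_of_mul_eq_intCast hq h3)
  have u0 : 0 < (k.gcd l).gcd q := Nat.gcd_pos_of_pos_right _ hq
  generalize (k.gcd l).gcd q = u at *
  obtain ⟨c, hc'⟩ := hd
  have hm : (u : ℚ) * x = u * x' + ((c * (x - x').num : ℤ) : ℚ) := by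
    have : (x - x').den * (x - x') = (x - x').num := Rat.den_mul_eq_num _
    have h4 : (u : ℚ) * (x - x') = c * (x - x').num := by
      rw [← this]; nth_rw 1 [hc']; push_cast; ring
    push_cast; linarith
  rw [hm, Int.ceil_add_intCast] at hc
  rw [show (c * (x - x').num : ℤ) = 0 by linarith] at hm
  have u0' : (u : ℚ) ≠ 0 := by positivity
  simpa [u0'] using hm

/-- A bilinear form supported on few pairs in each fibre of `σ` is bounded by the `ℓ²` norms. -/
theorem sum_mul_sub_le_sqrt (T : Finset (ℚ × ℚ)) (A Z : Finset ℚ) (σ : ℚ → ℚ) (D : ℝ)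
    (f g : ℚ → ℝ) (hA : ∀ p ∈ T, p.1 ∈ A) (hZ : ∀ p ∈ T, p.1 - p.2 ∈ Z)
    (hσ : ∀ p ∈ T, σ (p.1 - p.2) = σ p.1)
    (hcard : ∀ c, (((T.filter fun p => σ p.1 = c).card : ℕ) : ℝ) ≤ D) :
    ∑ p ∈ T, g p.1 * f (p.1 - p.2) ≤
      √D * (√(∑ x ∈ A, g x ^ 2) * √(∑ z ∈ Z, f z ^ 2)) := by
  classical
  set C : Finset ℚ := A.image σ ∪ Z.image σ
  have eA : ∑ x ∈ A, g x ^ 2 = ∑ c ∈ C, ∑ x ∈ A with σ x = c, g x ^ 2 :=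
    (Finset.sum_fiberwise_of_maps_to
      (fun x hx => Finset.mem_union_left _ (Finset.mem_image_of_mem σ hx)) _).symm
  have eZ : ∑ z ∈ Z, f z ^ 2 = ∑ c ∈ C, ∑ z ∈ Z with σ z = c, f z ^ 2 :=
    (Finset.sum_fiberwise_of_maps_to
      (fun x hx => Finset.mem_union_right _ (Finset.mem_image_of_mem σ hx)) _).symm
  have eT : ∑ p ∈ T, g p.1 * f (p.1 - p.2) =
      ∑ c ∈ C, ∑ p ∈ T with σ p.1 = c, g p.1 * f (p.1 - p.2) :=
    (Finset.sum_fiberwise_of_maps_to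
      (fun p hp => Finset.mem_union_left _ (Finset.mem_image_of_mem σ (hA p hp))) _).symm
  rw [eT]
  calc _ ≤ ∑ c ∈ C, √D * (√(∑ x ∈ A with σ x = c, g x ^ 2) *
        √(∑ z ∈ Z with σ z = c, f z ^ 2)) := by
        refine Finset.sum_le_sum fun c _ => ?_
        rw [← Real.sqrt_mul (Finset.sum_nonneg fun _ _ => sq_nonneg _),
          ← Real.sqrt_mul ((Nat.cast_nonneg _).trans (hcard c))]
        apply Real.le_sqrt_of_sq_le
        refine (sq_sum_le_card_mul_sum_sq (s := T.filter fun p => σ p.1 = c)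
          (f := fun p => g p.1 * f (p.1 - p.2))).trans ?_
        refine mul_le_mul (hcard c) ?_ (Finset.sum_nonneg fun _ _ => sq_nonneg _)
          ((Nat.cast_nonneg _).trans (hcard c))
        rw [Finset.sum_mul_sum, ← Finset.sum_product']
        have hinj : Set.InjOn (fun p : ℚ × ℚ => (p.1, p.1 - p.2))
            (T.filter fun p => σ p.1 = c : Finset (ℚ × ℚ)) := by
          rintro ⟨a, b⟩ - ⟨a', b'⟩ - h
          simp only [Prod.mk.injEq] at h
          obtain ⟨rfl, h⟩ := h
          simpa using h
        simp only [mul_pow]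
        rw [← Finset.sum_image (f := fun p : ℚ × ℚ => g p.1 ^ 2 * f p.2 ^ 2) hinj]
        refine Finset.sum_le_sum_of_subset_of_nonneg (fun p hp => ?_) fun _ _ _ => by positivity
        obtain ⟨p', hp', rfl⟩ := Finset.mem_image.1 hp
        obtain ⟨hT, rfl⟩ := Finset.mem_filter.1 hp'
        exact Finset.mem_product.2 ⟨Finset.mem_filter.2 ⟨hA p' hT, rfl⟩,
          Finset.mem_filter.2 ⟨hZ p' hT, hσ p' hT⟩⟩
    _ ≤ _ := by
        rw [← Finset.mul_sum, eA, eZ]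
        exact mul_le_mul_of_nonneg_left (Real.sum_sqrt_mul_sqrt_le _
          (fun _ => Finset.sum_nonneg fun _ _ => sq_nonneg _)
          (fun _ => Finset.sum_nonneg fun _ _ => sq_nonneg _)) (Real.sqrt_nonneg _)

theorem mem_Qle {Q : ℕ} {x : ℚ} (hx : x ∈ Qle Q) :
    0 < x ∧ x ≤ 1 ∧ x.den ≤ Q ∧ x ∈ Qeq x.den := by
  obtain ⟨q, hq, hxq⟩ := Finset.mem_biUnion.1 hx
  have h' := hxq
  simp only [Qeq, Finset.mem_image, Finset.mem_filter, Finset.mem_Icc] at h'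
  obtain ⟨a, ⟨⟨ha, haq⟩, hg⟩, rfl⟩ := h'
  have hq0 : 0 < q := by omega
  have hden : ((a : ℚ) / q).den = q := by
    have := Rat.den_div_eq_of_coprime (a := a) (b := q) (by exact_mod_cast hq0) (by simpa using hg)
    rw [Int.cast_natCast, Int.cast_natCast] at this
    exact Int.natCast_inj.1 this
  have hq0' : (0 : ℚ) < q := by exact_mod_cast hq0
  have ha0 : (0 : ℚ) < a := by exact_mod_cast ha
  refine ⟨by positivity, (div_le_one hq0').2 (by exact_mod_cast haq), ?_, ?_⟩
  · rw [hden]; exact (Finset.mem_Icc.1 hq).2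
  · rw [hden]; exact hxq

theorem le_MlogAvg (w : ℕ → ℝ) (X x : ℕ) (hx : 2 ≤ x) (hX : x ≤ X) :
    (∑ n ∈ Finset.Icc 1 x, w n / (n : ℝ)) / Real.log x ≤ MlogAvg w X := by
  unfold MlogAvg
  set F : ℕ → ℝ := fun x => (∑ n ∈ Finset.Icc 1 x, w n / (n : ℝ)) / Real.log x with hF
  have hmem : x ∈ Finset.Icc 2 X := Finset.mem_Icc.2 ⟨hx, hX⟩
  refine le_ciSup_of_le (f := fun x => ⨆ _ : x ∈ Finset.Icc 2 X, F x) ?_ x ?_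
  · refine (((Finset.Icc 2 X).finite_toSet.image F).insert 0).bddAbove.mono ?_
    rintro _ ⟨y, rfl⟩
    by_cases hy : y ∈ Finset.Icc 2 X
    · exact Or.inr ⟨y, hy, by simp only [ciSup_pos hy]⟩
    · left
      have : IsEmpty (y ∈ Finset.Icc 2 X) := ⟨hy⟩
      simp only [Real.iSup_of_isEmpty]
  · simp only [ciSup_pos hmem]
    exact le_rfl

theorem sum_inv_sqrt_le (N : ℕ) : ∑ t ∈ Finset.Icc 1 N, (√(t : ℝ))⁻¹ ≤ 2 * √(N : ℝ) := by
  induction N with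
  | zero => simp
  | succ N ih =>
    rw [Finset.sum_Icc_succ_top (by omega)]
    have h1 : 0 < √((N + 1 : ℕ) : ℝ) := Real.sqrt_pos.2 (by positivity)
    have h2 := Real.sq_sqrt (show (0 : ℝ) ≤ ((N + 1 : ℕ) : ℝ) by positivity)
    have h3 := Real.sq_sqrt (show (0 : ℝ) ≤ (N : ℝ) by positivity)
    have h4 := Real.sqrt_nonneg (N : ℝ)
    have h5 : (√((N + 1 : ℕ) : ℝ))⁻¹ ≤ 2 * √((N + 1 : ℕ) : ℝ) - 2 * √(N : ℝ) := by
      rw [inv_le_iff_one_le_mul₀ h1]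
      push_cast at h2 h1 ⊢
      nlinarith [sq_nonneg (√((N : ℝ) + 1) - √(N : ℝ))]
    linarith

/-- The bilinear bound for pairs whose denominators `k`, `l`, `q` are fixed. -/
theorem sum_fixed_den_le (T : Finset (ℚ × ℚ)) (A Z B : Finset ℚ) (k l q n : ℕ) (f g : ℚ → ℝ)
    (hA : ∀ p ∈ T, p.1 ∈ A) (hZ : ∀ p ∈ T, p.1 - p.2 ∈ Z) (hB : ∀ p ∈ T, p.2 ∈ B)
    (hk : ∀ p ∈ T, p.1.den = k) (hl : ∀ p ∈ T, p.2.den = l) (hq : ∀ p ∈ T, (p.1 - p.2).den = q)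
    (h01 : ∀ p ∈ T, 0 < p.1 ∧ p.1 ≤ 1) (hn : B.card ≤ n) :
    ∑ p ∈ T, g p.1 * f (p.1 - p.2) ≤
      √((n : ℝ) * ((k.gcd l).gcd q : ℕ)) * (√(∑ x ∈ A, g x ^ 2) * √(∑ z ∈ Z, f z ^ 2)) := by
  classical
  refine sum_mul_sub_le_sqrt T A Z (fun x => Int.fract ((l : ℚ) * x)) _ f g hA hZ ?_ ?_
  · intro p hp
    have h1 : (p.2.den : ℚ) * p.2 = p.2.num := Rat.den_mul_eq_num _
    rw [hl p hp] at h1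
    simp only [mul_sub, h1, Int.fract_sub_intCast]
  · intro c
    have hcard : (T.filter fun p => Int.fract ((l : ℚ) * p.1) = c).card ≤
        (B ×ˢ Finset.Icc (1 : ℤ) ((k.gcd l).gcd q : ℕ)).card := by
      refine Finset.card_le_card_of_injOn
        (fun p => (p.2, ⌈(((k.gcd l).gcd q : ℕ) : ℚ) * p.1⌉)) ?_ ?_
      · intro p hp
        have hp := (Finset.mem_filter.1 hp).1
        have hu : 0 < (k.gcd l).gcd q :=
          Nat.gcd_pos_of_pos_right _ (hq p hp ▸ (p.1 - p.2).den_pos)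
        obtain ⟨h0, h1⟩ := h01 p hp
        have hu' : (0 : ℚ) < ((k.gcd l).gcd q : ℕ) := by exact_mod_cast hu
        refine Finset.mem_coe.2 (Finset.mem_product.2 ⟨hB p hp, Finset.mem_Icc.2 ⟨?_, ?_⟩⟩)
        · exact Int.one_le_ceil_iff.2 (by positivity)
        · refine Int.ceil_le.2 ?_
          rw [Int.cast_natCast]
          exact mul_le_of_le_one_right hu'.le h1
      · rintro ⟨x, y⟩ hp ⟨x', y'⟩ hp' h
        obtain ⟨hp, hc⟩ := Finset.mem_filter.1 hp
        obtain ⟨hp', hc'⟩ := Finset.mem_filter.1 hp'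
        simp only [Prod.mk.injEq] at h
        obtain ⟨rfl, h⟩ := h
        have e1 : ∀ {d : ℕ} {a b : ℚ}, a.den = d → b.den = d →
            ∃ m : ℤ, (d : ℚ) * (a - b) = m := by
          intro d a b ha hb
          refine ⟨a.num - b.num, ?_⟩
          push_cast
          rw [← Rat.den_mul_eq_num a, ← Rat.den_mul_eq_num b, ha, hb]
          ring
        have hx : x = x' := by
          refine eq_of_ceil_eq (hk _ hp ▸ Rat.den_pos _) (hl _ hp ▸ Rat.den_pos _)
            (hq _ hp ▸ Rat.den_pos _) (e1 (hk _ hp) (hk _ hp')) ?_ ?_ h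
          · obtain ⟨m, hm⟩ := Int.fract_eq_fract.1 (hc.trans hc'.symm)
            exact ⟨m, by rw [mul_sub]; exact hm⟩
          · simpa using e1 (hq _ hp) (hq _ hp')
        rw [hx]
    rw [Finset.card_product, Int.card_Icc] at hcard
    have h2 : (T.filter fun p => Int.fract ((l : ℚ) * p.1) = c).card ≤
        n * (k.gcd l).gcd q := by
      refine hcard.trans (Nat.mul_le_mul hn ?_)
      omega
    exact_mod_cast h2

/-- Cauchy–Schwarz for the sum over the factorization parameters of the denominators. -/
theorem sum_factorization_le (L N n : ℕ) (w a b : ℕ → ℝ) (hw : ∀ k, 0 ≤ w k)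
    (hsub : SubMult w) (ha : ∀ k, 0 ≤ a k) (hb : ∀ k, 0 ≤ b k) (haN : ∀ k, N < k → a k = 0)
    (hbN : ∀ k, N < k → b k = 0) :
    ∑ p ∈ (Finset.Icc 1 N ×ˢ Finset.Icc 1 N ×ˢ Finset.Icc 1 N ×ˢ Finset.Icc 1 N) with
        p.1 * p.2.2.1 * p.2.2.2 ≤ L,
      w (p.1 * p.2.1 * p.2.2.2) * (√((n : ℝ) * p.2.2.2) *
        (√(a (p.1 * p.2.1 * p.2.2.2)) * √(b (p.2.1 * p.2.2.1 * p.2.2.2)))) ≤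
      √(2 * √(L : ℝ) * ∑ k ∈ Finset.Icc 1 N, w k * a k) *
      √(n * √(L : ℝ) * (∑ r ∈ Finset.Icc 1 L, w r * tau3 r / (r : ℝ)) *
        ∑ q ∈ Finset.Icc 1 N, w q * (tau3 q : ℝ) ^ 2 * b q) := by
  set J := Finset.Icc 1 N with hJ
  set I := (J ×ˢ J ×ˢ J ×ˢ J).filter fun p => p.1 * p.2.2.1 * p.2.2.2 ≤ L with hI
  set S := ∑ r ∈ Finset.Icc 1 L, w r * tau3 r / (r : ℝ) with hS
  have hS0 : 0 ≤ S := Finset.sum_nonneg fun r _ => by have := hw r; positivity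
  set P : ℕ × ℕ × ℕ × ℕ → ℝ := fun p =>
    w (p.1 * p.2.1 * p.2.2.2) * a (p.1 * p.2.1 * p.2.2.2) / tau3 (p.1 * p.2.1 * p.2.2.2) *
      (√(p.2.2.2 : ℝ) * √(p.1 : ℝ) * (√(p.2.2.1 : ℝ))⁻¹) with hP
  set Q : ℕ × ℕ × ℕ × ℕ → ℝ := fun p =>
    n * (w (p.1 * p.2.1 * p.2.2.2) * tau3 (p.1 * p.2.1 * p.2.2.2)) *
      b (p.2.1 * p.2.2.1 * p.2.2.2) *
      (√(p.2.2.2 : ℝ) * √(p.2.2.1 : ℝ) * (√(p.1 : ℝ))⁻¹) with hQ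
  have hP0 : ∀ p, 0 ≤ P p := fun p => by
    have := hw (p.1 * p.2.1 * p.2.2.2); have := ha (p.1 * p.2.1 * p.2.2.2)
    simp only [hP]; positivity
  have hQ0 : ∀ p, 0 ≤ Q p := fun p => by
    have := hw (p.1 * p.2.1 * p.2.2.2); have := hb (p.2.1 * p.2.2.1 * p.2.2.2)
    simp only [hQ]; positivity
  have hterm : ∀ p ∈ I, w (p.1 * p.2.1 * p.2.2.2) * (√((n : ℝ) * p.2.2.2) *
        (√(a (p.1 * p.2.1 * p.2.2.2)) * √(b (p.2.1 * p.2.2.1 * p.2.2.2)))) =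
      √(P p) * √(Q p) := by
    rintro ⟨r, s, t, u⟩ hp
    simp only [hI, hJ, Finset.mem_filter, Finset.mem_product, Finset.mem_Icc] at hp
    obtain ⟨⟨⟨hr, -⟩, ⟨hs, -⟩, ⟨ht, -⟩, ⟨hu, -⟩⟩, -⟩ := hp
    rw [← Real.sqrt_mul (hP0 _)]
    have hw' := hw (r * s * u)
    have hb' := hb (s * t * u)
    have ha' := ha (r * s * u)
    have hτ : (tau3 (r * s * u) : ℝ) ≠ 0 :=
      Nat.cast_ne_zero.2 (tau3_pos _ (Nat.mul_pos (Nat.mul_pos hr hs) hu)).ne'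
    have hR : √(r : ℝ) ≠ 0 := (Real.sqrt_pos.2 (by exact_mod_cast hr)).ne'
    have hT : √(t : ℝ) ≠ 0 := (Real.sqrt_pos.2 (by exact_mod_cast ht)).ne'
    have hU := Real.sq_sqrt (Nat.cast_nonneg (α := ℝ) u)
    refine ((Real.sqrt_eq_iff_mul_self_eq (mul_nonneg (hP0 _) (hQ0 _)) (by positivity)).2 ?_).symm
    have hnu := Real.mul_self_sqrt (show (0 : ℝ) ≤ n * u by positivity)
    simp only [hP, hQ]
    calc _ = w (r * s * u) ^ 2 * n * √(u : ℝ) ^ 2 * (a (r * s * u) * b (s * t * u)) := by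
          field_simp
      _ = w (r * s * u) ^ 2 * (√((n : ℝ) * u) * √((n : ℝ) * u)) *
          ((√(a (r * s * u)) * √(a (r * s * u))) * (√(b (s * t * u)) * √(b (s * t * u)))) := by
          rw [hU, hnu, Real.mul_self_sqrt ha', Real.mul_self_sqrt hb']; ring
      _ = _ := by ring
  rw [Finset.sum_congr rfl hterm]
  refine (Real.sum_sqrt_mul_sqrt_le I hP0 hQ0).trans ?_
  have hPsum : ∑ p ∈ I, P p ≤ 2 * √(L : ℝ) * ∑ k ∈ J, w k * a k := by
    have e : ∑ p ∈ I, P p = ∑ c ∈ J ×ˢ J ×ˢ J, ∑ t ∈ J with c.1 * t * c.2.2 ≤ L,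
        P (c.1, c.2.1, t, c.2.2) := by
      simp only [hI, Finset.sum_filter, Finset.sum_product]
      exact Finset.sum_congr rfl fun r _ => Finset.sum_congr rfl fun s _ => Finset.sum_comm
    rw [e]
    calc _ ≤ ∑ c ∈ J ×ˢ J ×ˢ J, w (c.1 * c.2.1 * c.2.2) * a (c.1 * c.2.1 * c.2.2) /
          tau3 (c.1 * c.2.1 * c.2.2) * (2 * √(L : ℝ)) := by
          refine Finset.sum_le_sum ?_
          rintro ⟨r, s, u⟩ hc
          simp only [hJ, Finset.mem_product, Finset.mem_Icc] at hc
          obtain ⟨⟨hr, -⟩, ⟨hs, -⟩, ⟨hu, -⟩⟩ := hc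
          simp only [hP]
          have hw' := hw (r * s * u)
          have ha' := ha (r * s * u)
          rw [← Finset.mul_sum, ← Finset.mul_sum]
          refine mul_le_mul_of_nonneg_left ?_ (by positivity)
          have h1 : ∑ t ∈ J with r * t * u ≤ L, (√(t : ℝ))⁻¹ ≤ 2 * √((L / (r * u) : ℕ) : ℝ) := by
            refine le_trans ?_ (sum_inv_sqrt_le _)
            refine Finset.sum_le_sum_of_subset_of_nonneg (fun t ht => ?_)
              fun _ _ _ => by positivity
            simp only [hJ, Finset.mem_filter, Finset.mem_Icc] at ht
            refine Finset.mem_Icc.2 ⟨ht.1.1, (Nat.le_div_iff_mul_le (Nat.mul_pos hr hu)).2 ?_⟩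
            calc t * (r * u) = r * t * u := by ring
              _ ≤ L := ht.2
          refine (mul_le_mul_of_nonneg_left h1 (by positivity)).trans ?_
          have h2 : √(u : ℝ) * √(r : ℝ) * √((L / (r * u) : ℕ) : ℝ) ≤ √(L : ℝ) := by
            rw [← Real.sqrt_mul (by positivity), ← Real.sqrt_mul (by positivity)]
            refine Real.sqrt_le_sqrt ?_
            have := Nat.mul_div_le L (r * u)
            calc (u : ℝ) * r * ((L / (r * u) : ℕ) : ℝ) = ((r * u * (L / (r * u)) : ℕ) : ℝ) := by
                  push_cast; ring
              _ ≤ L := by exact_mod_cast this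
          linarith
      _ ≤ ∑ k ∈ J, (tau3 k : ℝ) * (w k * a k / tau3 k * (2 * √(L : ℝ))) :=
          sum_mul_mul_le_sum_tau3 N N (fun k => w k * a k / tau3 k * (2 * √(L : ℝ)))
            (fun k => by have := hw k; have := ha k; positivity)
            (fun k hk => by simp [haN k hk])
      _ = _ := by
          rw [Finset.mul_sum]
          refine Finset.sum_congr rfl fun k hk => ?_
          have : (tau3 k : ℝ) ≠ 0 := Nat.cast_ne_zero.2 (tau3_pos k (Finset.mem_Icc.1 hk).1).ne'
          field_simp
  have hQsum : ∑ p ∈ I, Q p ≤ n * √(L : ℝ) * S * ∑ q ∈ J, w q * (tau3 q : ℝ) ^ 2 * b q := by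
    have e : ∑ p ∈ I, Q p = ∑ c ∈ J ×ˢ J ×ˢ J, ∑ r ∈ J with r * c.2.1 * c.2.2 ≤ L,
        Q (r, c.1, c.2.1, c.2.2) := by
      simp only [hI, Finset.sum_filter]
      rw [Finset.sum_product, Finset.sum_comm]
    rw [e]
    calc _ ≤ ∑ c ∈ J ×ˢ J ×ˢ J, n * (w (c.1 * c.2.1 * c.2.2) * tau3 (c.1 * c.2.1 * c.2.2)) *
          b (c.1 * c.2.1 * c.2.2) * (√(L : ℝ) * S) := by
          refine Finset.sum_le_sum ?_
          rintro ⟨s, t, u⟩ hc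
          simp only [hJ, Finset.mem_product, Finset.mem_Icc] at hc
          obtain ⟨⟨hs, -⟩, ⟨ht, -⟩, ⟨hu, -⟩⟩ := hc
          simp only [hQ]
          have hwq := hw (s * t * u)
          have hb' := hb (s * t * u)
          have hsub1 : J.filter (fun r => r * t * u ≤ L) ⊆ Finset.Icc 1 L := by
            intro r hr
            simp only [hJ, Finset.mem_filter, Finset.mem_Icc] at hr
            refine Finset.mem_Icc.2 ⟨hr.1.1, le_trans ?_ hr.2⟩
            rw [mul_assoc]
            exact Nat.le_mul_of_pos_right _ (Nat.mul_pos ht hu)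
          rw [hS, Finset.mul_sum, Finset.mul_sum]
          refine le_trans (Finset.sum_le_sum fun r hr => ?_)
            (Finset.sum_le_sum_of_subset_of_nonneg hsub1 fun r _ _ => by
              have := hw r; positivity)
          simp only [hJ, Finset.mem_filter, Finset.mem_Icc] at hr
          obtain ⟨⟨hr, -⟩, hrL⟩ := hr
          have hwr := hw r
          have hwk := hw (r * s * u)
          have hsu : 0 < s * u := Nat.mul_pos hs hu
          have hw1 : w (r * s * u) ≤ w r * w (s * t * u) := by
            rw [mul_assoc]
            refine (hsub.1 r (s * u) hr hsu).trans (mul_le_mul_of_nonneg_left ?_ hwr)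
            exact hsub.2 _ _ (Nat.mul_pos (Nat.mul_pos hs ht) hu) ⟨t, by ring⟩
          have hτ1 : (tau3 (r * s * u) : ℝ) ≤ tau3 r * tau3 (s * t * u) := by
            rw [mul_assoc, show s * t * u = s * u * t by ring]
            exact_mod_cast (tau3_mul_le r (s * u) hr hsu).trans
              (Nat.mul_le_mul_left _ (tau3_le_mul_right _ t ht))
          have hr' : (0 : ℝ) < r := by exact_mod_cast hr
          have h3 : √(u : ℝ) * √(t : ℝ) * (√(r : ℝ))⁻¹ ≤ √(L : ℝ) / r := by
            rw [le_div_iff₀ hr']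
            have h4 : (√(r : ℝ))⁻¹ * r = √(r : ℝ) := by
              nth_rw 2 [← Real.mul_self_sqrt hr'.le]
              field_simp
            rw [mul_assoc, h4, ← Real.sqrt_mul (by positivity), ← Real.sqrt_mul (by positivity)]
            refine Real.sqrt_le_sqrt ?_
            calc (u : ℝ) * t * r = ((r * t * u : ℕ) : ℝ) := by push_cast; ring
              _ ≤ L := by exact_mod_cast hrL
          calc _ ≤ n * ((w r * w (s * t * u)) * (tau3 r * tau3 (s * t * u))) * b (s * t * u) *
                (√(L : ℝ) / r) := by gcongr
            _ = _ := by ring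
      _ ≤ ∑ q ∈ J, (tau3 q : ℝ) * (n * (w q * tau3 q) * b q * (√(L : ℝ) * S)) :=
          sum_mul_mul_le_sum_tau3 N N (fun q => n * (w q * tau3 q) * b q * (√(L : ℝ) * S))
            (fun k => by have := hw k; have := hb k; positivity)
            (fun k hk => by simp [hbN k hk])
      _ = _ := by
          rw [Finset.mul_sum _ _ (n * √(L : ℝ) * S)]
          exact Finset.sum_congr rfl fun k _ => by ring
  gcongr

theorem statement_4 :
    ∃ C > (0 : ℝ), ∀ K L n X : ℕ, 1 ≤ K → 2 ≤ L → 1 ≤ n → 2 ≤ X →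
      ∀ f g : ℚ →₀ ℕ, f 0 = 0 → (∀ x, f x ≤ X) → (∀ x, g x ≤ X) → g.support ⊆ Qle K →
      ∀ B : Finset ℚ, B ⊆ Qle L →
        (∀ ℓ : ℕ, 1 ≤ ℓ → ℓ ≤ L → (B ∩ Qeq ℓ).card ≤ n) →
      ∀ w : ℕ → ℝ, (∀ k, 0 ≤ w k) → SubMult w →
        (∑ x ∈ g.support, ∑ y ∈ B, w x.den * (g x : ℝ) * (f (x - y) : ℝ)) ≤
          C * Real.log X *
            Real.sqrt ((L : ℝ) * n * Real.log L * MlogAvg (fun k => w k * tau3 k) L) *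
            Real.sqrt (∑ z ∈ f.support, w z.den * (tau3 z.den : ℝ) ^ 2 * (f z : ℝ) ^ 2) *
            Real.sqrt (∑ x ∈ g.support, w x.den * (g x : ℝ) ^ 2) := by
  classical
  refine ⟨4, by norm_num, ?_⟩
  intro K L n X hK hL hn hX f g hf0 hfX hgX hgK B hBL hBn w hw hsub
  choose τ hτpos hτk hτl hτq hτu using Rat.exists_den_factorization
  set N := L + g.support.sup Rat.den + f.support.sup Rat.den with hN
  have hgN : ∀ x ∈ g.support, x.den ≤ N := fun x hx => by
    have := Finset.le_sup (f := Rat.den) hx; omega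
  have hfN : ∀ x ∈ f.support, x.den ≤ N := fun x hx => by
    have := Finset.le_sup (f := Rat.den) hx; omega
  set a : ℕ → ℝ := fun k => ∑ x ∈ g.support with x.den = k, (g x : ℝ) ^ 2 with ha
  set b : ℕ → ℝ := fun q => ∑ z ∈ f.support with z.den = q, (f z : ℝ) ^ 2 with hb
  have haN : ∀ k, N < k → a k = 0 := fun k hk => by
    simp only [ha]
    rw [Finset.filter_false_of_mem, Finset.sum_empty]
    intro x hx; have := hgN x hx; omega
  have hbN : ∀ k, N < k → b k = 0 := fun k hk => by
    simp only [hb]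
    rw [Finset.filter_false_of_mem, Finset.sum_empty]
    intro x hx; have := hfN x hx; omega
  have hmain := sum_factorization_le L N n w a b hw hsub
    (fun k => Finset.sum_nonneg fun _ _ => sq_nonneg _)
    (fun k => Finset.sum_nonneg fun _ _ => sq_nonneg _) haN hbN
  set I := (Finset.Icc 1 N ×ˢ Finset.Icc 1 N ×ˢ Finset.Icc 1 N ×ˢ Finset.Icc 1 N).filter
    fun p => p.1 * p.2.2.1 * p.2.2.2 ≤ L with hI
  set T := (g.support ×ˢ B).filter fun p => p.1 - p.2 ∈ f.support with hT
  have hTmem : ∀ p ∈ T, p.1 ∈ g.support ∧ p.2 ∈ B ∧ p.1 - p.2 ∈ f.support := fun p hp => by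
    obtain ⟨h, h'⟩ := Finset.mem_filter.1 hp
    exact ⟨(Finset.mem_product.1 h).1, (Finset.mem_product.1 h).2, h'⟩
  have hTI : ∀ p ∈ T, τ p.1 p.2 ∈ I := by
    intro p hp
    obtain ⟨h1, h2, h3⟩ := hTmem p hp
    have hl := (mem_Qle (hBL h2)).2.2.1
    have hk := hgN _ h1
    have hq := hfN _ h3
    rw [hτl p.1 p.2] at hl
    rw [hτk p.1 p.2] at hk
    rw [hτq p.1 p.2] at hq
    obtain ⟨r0, s0, t0, u0⟩ := hτpos p.1 p.2
    have hsk := Nat.mul_pos (Nat.mul_pos r0 s0) u0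
    have hsq := Nat.mul_pos (Nat.mul_pos s0 t0) u0
    refine Finset.mem_filter.2 ⟨?_, hl⟩
    simp only [Finset.mem_product, Finset.mem_Icc]
    exact ⟨⟨r0, (Nat.le_of_dvd hsk ⟨_, mul_assoc _ _ _⟩).trans hk⟩,
      ⟨s0, (Nat.le_of_dvd hsq ⟨_, mul_assoc _ _ _⟩).trans hq⟩,
      ⟨t0, (Nat.le_of_dvd hsq ((dvd_mul_left _ _).mul_right _)).trans hq⟩,
      ⟨u0, (Nat.le_of_dvd hsq (dvd_mul_left _ _)).trans hq⟩⟩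
  have hS : ∑ x ∈ g.support, ∑ y ∈ B, w x.den * (g x : ℝ) * (f (x - y) : ℝ) =
      ∑ i ∈ I, ∑ p ∈ T with τ p.1 p.2 = i, w p.1.den * (g p.1 : ℝ) * (f (p.1 - p.2) : ℝ) := by
    rw [Finset.sum_fiberwise_of_maps_to (g := fun p : ℚ × ℚ => τ p.1 p.2) hTI,
      ← Finset.sum_product', hT, Finset.sum_filter]
    refine Finset.sum_congr rfl fun p _ => ?_
    split_ifs with h
    · rfl
    · rw [Finsupp.notMem_support_iff.1 h]; simp
  have hfib : ∀ i ∈ I,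
      ∑ p ∈ T with τ p.1 p.2 = i, w p.1.den * (g p.1 : ℝ) * (f (p.1 - p.2) : ℝ) ≤
      w (i.1 * i.2.1 * i.2.2.2) * (√((n : ℝ) * i.2.2.2) *
        (√(a (i.1 * i.2.1 * i.2.2.2)) * √(b (i.2.1 * i.2.2.1 * i.2.2.2)))) := by
    intro i hi
    have hfk : ∀ p ∈ T.filter (fun p => τ p.1 p.2 = i), p.1.den = i.1 * i.2.1 * i.2.2.2 :=
      fun p hp => by rw [hτk p.1 p.2, (Finset.mem_filter.1 hp).2]
    have hfl : ∀ p ∈ T.filter (fun p => τ p.1 p.2 = i), p.2.den = i.1 * i.2.2.1 * i.2.2.2 :=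
      fun p hp => by rw [hτl p.1 p.2, (Finset.mem_filter.1 hp).2]
    have hfq : ∀ p ∈ T.filter (fun p => τ p.1 p.2 = i),
        (p.1 - p.2).den = i.2.1 * i.2.2.1 * i.2.2.2 :=
      fun p hp => by rw [hτq p.1 p.2, (Finset.mem_filter.1 hp).2]
    have hfT : ∀ p ∈ T.filter (fun p => τ p.1 p.2 = i),
        p.1 ∈ g.support ∧ p.2 ∈ B ∧ p.1 - p.2 ∈ f.support :=
      fun p hp => hTmem p (Finset.mem_filter.1 hp).1
    rcases (T.filter fun p => τ p.1 p.2 = i).eq_empty_or_nonempty with he | ⟨p₀, hp₀⟩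
    · rw [he, Finset.sum_empty]
      exact mul_nonneg (hw _) (by positivity)
    have hgcd : ((i.1 * i.2.1 * i.2.2.2).gcd (i.1 * i.2.2.1 * i.2.2.2)).gcd
        (i.2.1 * i.2.2.1 * i.2.2.2) = i.2.2.2 := by
      have := hτu p₀.1 p₀.2
      rwa [hfk _ hp₀, hfl _ hp₀, hfq _ hp₀, (Finset.mem_filter.1 hp₀).2] at this
    have hcard : (B.filter fun y => y.den = i.1 * i.2.2.1 * i.2.2.2).card ≤ n := by
      have hl := (mem_Qle (hBL (hfT _ hp₀).2.1)).2.2.1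
      have hl0 := p₀.2.den_pos
      rw [hfl _ hp₀] at hl hl0
      refine le_trans (Finset.card_le_card fun y hy => ?_) (hBn _ hl0 hl)
      obtain ⟨hyB, hyl⟩ := Finset.mem_filter.1 hy
      exact Finset.mem_inter.2 ⟨hyB, hyl ▸ (mem_Qle (hBL hyB)).2.2.2⟩
    have key := sum_fixed_den_le (T.filter fun p => τ p.1 p.2 = i)
      (g.support.filter fun x => x.den = i.1 * i.2.1 * i.2.2.2)
      (f.support.filter fun z => z.den = i.2.1 * i.2.2.1 * i.2.2.2)
      (B.filter fun y => y.den = i.1 * i.2.2.1 * i.2.2.2) _ _ _ n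
      (fun z => (f z : ℝ)) (fun x => (g x : ℝ))
      (fun p hp => Finset.mem_filter.2 ⟨(hfT p hp).1, hfk p hp⟩)
      (fun p hp => Finset.mem_filter.2 ⟨(hfT p hp).2.2, hfq p hp⟩)
      (fun p hp => Finset.mem_filter.2 ⟨(hfT p hp).2.1, hfl p hp⟩) hfk hfl hfq
      (fun p hp => by
        have := mem_Qle (hgK (hfT p hp).1)
        exact ⟨this.1, this.2.1⟩) hcard
    rw [hgcd] at key
    refine le_trans (le_of_eq ?_) (mul_le_mul_of_nonneg_left key (hw _))
    rw [Finset.mul_sum]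
    exact Finset.sum_congr rfl fun p hp => by rw [hfk p hp, mul_assoc]
  have eA : ∑ k ∈ Finset.Icc 1 N, w k * a k = ∑ x ∈ g.support, w x.den * (g x : ℝ) ^ 2 := by
    rw [← Finset.sum_fiberwise_of_maps_to (g := Rat.den) (t := Finset.Icc 1 N)
      (fun x hx => Finset.mem_Icc.2 ⟨x.den_pos, hgN x hx⟩)]
    refine Finset.sum_congr rfl fun k _ => ?_
    rw [ha, Finset.mul_sum]
    exact Finset.sum_congr rfl fun x hx => by rw [(Finset.mem_filter.1 hx).2]
  have eZ : ∑ q ∈ Finset.Icc 1 N, w q * (tau3 q : ℝ) ^ 2 * b q =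
      ∑ z ∈ f.support, w z.den * (tau3 z.den : ℝ) ^ 2 * (f z : ℝ) ^ 2 := by
    rw [← Finset.sum_fiberwise_of_maps_to (g := Rat.den) (t := Finset.Icc 1 N)
      (fun x hx => Finset.mem_Icc.2 ⟨x.den_pos, hfN x hx⟩)]
    refine Finset.sum_congr rfl fun k _ => ?_
    rw [hb, Finset.mul_sum]
    exact Finset.sum_congr rfl fun x hx => by rw [(Finset.mem_filter.1 hx).2]
  rw [eA, eZ] at hmain
  rw [hS]
  refine (Finset.sum_le_sum hfib).trans (hmain.trans ?_)
  set U := ∑ x ∈ g.support, w x.den * (g x : ℝ) ^ 2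
  set V := ∑ z ∈ f.support, w z.den * (tau3 z.den : ℝ) ^ 2 * (f z : ℝ) ^ 2
  have hU0 : 0 ≤ U := Finset.sum_nonneg fun x _ => by have := hw x.den; positivity
  have hV0 : 0 ≤ V := Finset.sum_nonneg fun x _ => by have := hw x.den; positivity
  have hlogL : 0 < Real.log L := Real.log_pos (by exact_mod_cast hL)
  have hM := le_MlogAvg (fun k => w k * tau3 k) L L hL le_rfl
  rw [div_le_iff₀ hlogL] at hM
  have hS0 : 0 ≤ ∑ r ∈ Finset.Icc 1 L, w r * tau3 r / (r : ℝ) :=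
    Finset.sum_nonneg fun r _ => by have := hw r; positivity
  set M := MlogAvg (fun k => w k * tau3 k) L
  have hM0 : 0 ≤ M * Real.log L := hS0.trans hM
  have hlogX : 1 / 2 ≤ Real.log X := by
    have h1 := Real.log_two_gt_d9
    have h2 : Real.log 2 ≤ Real.log X := Real.log_le_log (by norm_num) (by exact_mod_cast hX)
    linarith
  have hD0 : 0 ≤ (L : ℝ) * n * Real.log L * M := by
    have : (L : ℝ) * n * Real.log L * M = (L : ℝ) * n * (M * Real.log L) := by ring
    rw [this]; positivity
  calc _ ≤ √(2 * √(L : ℝ) * U) * √(n * √(L : ℝ) * (M * Real.log L) * V) := by gcongr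
    _ = √2 * (√((L : ℝ) * n * Real.log L * M) * √V * √U) := by
        rw [← Real.sqrt_mul (by positivity), ← Real.sqrt_mul hD0,
          ← Real.sqrt_mul (by positivity), ← Real.sqrt_mul (by norm_num)]
        congr 1
        have := Real.mul_self_sqrt (Nat.cast_nonneg (α := ℝ) L)
        linear_combination (2 * U * n * (M * Real.log L) * V) * this
    _ ≤ 4 * Real.log X * (√((L : ℝ) * n * Real.log L * M) * √V * √U) := by
        refine mul_le_mul_of_nonneg_right ?_ (by positivity)
        have : √2 ≤ 2 := Real.sqrt_le_iff.2 (by norm_num)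
        linarith
    _ = _ := by ring
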